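/- arXiv:1809.07750 — 2 statements merged into one kernel-verified Lean document; each statement's English description precedes it below -/
import Mathlib

section
/- For an ε-differentially private mechanism run k times (each invocation (ε,0)-DP), advanced composition yields, for any δ' > 0, an overall guarantee of (ε', kδ + δ')-differential privacy where ε' = ε·√(2k·ln(1/δ')) + k·ε·(e^ε − 1). -/
open MeasureTheory Real Classical

/-- Two databases are neighbors if they differ in exactly one entry. -/
def Neighbor {D : Type*} {n : ℕ} (x y : Fin n → D) : Prop :=
  (Finset.univ.filter (fun i => x i ≠ y i)).card = 1

/-- A randomized mechanism `K` is `(ε, δ)`-differentially private. -/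
def DiffPriv {D : Type*} {n : ℕ} {R : Type*} [MeasurableSpace R]
    (K : (Fin n → D) → Measure R) (ε δ : ℝ) : Prop :=
  ∀ x y : Fin n → D, Neighbor x y → ∀ S : Set R, MeasurableSet S →
    K x S ≤ ENNReal.ofReal (Real.exp ε) * K y S + ENNReal.ofReal δ

open ProbabilityTheory in
lemma ac_pi_smul {k : ℕ} {R : Fin k → Type*} [∀ i, MeasurableSpace (R i)]
    (ν : ∀ i, Measure (R i)) [∀ i, IsProbabilityMeasure (ν i)] (c : Fin k → ENNReal)
    (hc : ∀ i, c i ≤ 1) :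
    Measure.pi (fun i => c i • ν i) = (∏ i, c i) • Measure.pi ν := by
  have : ∀ i, IsFiniteMeasure (c i • ν i) := fun i =>
    ⟨by simpa using lt_of_le_of_lt (hc i) ENNReal.one_lt_top⟩
  apply Measure.pi_eq
  intro s hs
  simp [Finset.prod_mul_distrib]

lemma ac_pi_mono {k : ℕ} {R : Fin k → Type*} [∀ i, MeasurableSpace (R i)]
    (μ ν : ∀ i, Measure (R i)) [∀ i, IsFiniteMeasure (μ i)]
    (h : ∀ i, μ i ≤ ν i) : Measure.pi μ ≤ Measure.pi ν := by
  rw [Measure.pi_def ν]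
  refine Measure.le_iff.2 fun s hs => ?_
  rw [toMeasure_apply _ _ hs]
  have : (Measure.pi μ).toOuterMeasure ≤ OuterMeasure.pi fun i => (ν i).toOuterMeasure := by
    rw [OuterMeasure.le_pi]
    intro s _
    have : (Measure.pi μ) (Set.univ.pi s) ≤ ∏ i, ν i (s i) := by
      rw [Measure.pi_pi]
      exact Finset.prod_le_prod' fun i _ => h i _
    exact this
  exact this s

open ProbabilityTheory in
lemma ac_pi_withDensity {k : ℕ} {R : Fin k → Type*} [∀ i, MeasurableSpace (R i)]
    (ν : ∀ i, Measure (R i)) [∀ i, IsProbabilityMeasure (ν i)]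
    (f : ∀ i, R i → ENNReal) (hf : ∀ i, Measurable (f i))
    [∀ i, IsFiniteMeasure ((ν i).withDensity (f i))] :
    Measure.pi (fun i => (ν i).withDensity (f i)) =
      (Measure.pi ν).withDensity (fun x => ∏ i, f i (x i)) := by
  apply Measure.pi_eq
  intro s hs
  rw [withDensity_apply _ (MeasurableSet.univ_pi hs), ← lintegral_indicator (MeasurableSet.univ_pi hs)]
  have h1 : ∀ x : ∀ i, R i, (Set.univ.pi s).indicator (fun x => ∏ i, f i (x i)) x
      = ∏ i, (s i).indicator (f i) (x i) := by
    intro x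
    by_cases hx : x ∈ Set.univ.pi s
    · rw [Set.indicator_of_mem hx]
      exact Finset.prod_congr rfl fun i _ => (Set.indicator_of_mem (hx i trivial) _).symm
    · rw [Set.indicator_of_notMem hx]
      simp only [Set.mem_pi, not_forall] at hx
      obtain ⟨i, _, hi⟩ := hx
      exact (Finset.prod_eq_zero (Finset.mem_univ i) (Set.indicator_of_notMem hi _)).symm
  simp_rw [h1]
  have hm : ∀ i, Measurable ((s i).indicator (f i)) := fun i => (hf i).indicator (hs i)
  rw [lintegral_prod_eq_prod_lintegral_of_indepFun Finset.univ
    (fun i (x : ∀ i, R i) => (s i).indicator (f i) (x i))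
    (iIndepFun_pi (X := fun i => (s i).indicator (f i)) (fun i => (hm i).aemeasurable))
    (fun i => (hm i).comp (measurable_pi_apply i))]
  refine Finset.prod_congr rfl fun i _ => ?_
  rw [withDensity_apply _ (hs i), ← lintegral_indicator (hs i),
    ← (measurePreserving_eval ν i).lintegral_comp (hm i)]

/-- Common part of an approximately indistinguishable pair. -/
def ACGood {R : Type*} [MeasurableSpace R] (P Q : Measure R) (ε δ : ℝ) : Prop :=
  ∃ (ν : Measure R) (L : R → ℝ) (c : ENNReal), IsProbabilityMeasure ν ∧ Measurable L ∧
    (∀ r, L r ∈ Set.Icc (-ε) ε) ∧ c ≤ 1 ∧ 1 ≤ c + ENNReal.ofReal δ ∧ c • ν ≤ P ∧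
    c • ν.withDensity (fun r => ENNReal.ofReal (Real.exp (-L r))) ≤ Q ∧
    1 ≤ ∫⁻ r, ENNReal.ofReal (Real.exp (-L r)) ∂ν

lemma ac_pointwise (ε L : ℝ) (hL : L ∈ Set.Icc (-ε) ε) :
    L ≤ ε * (Real.exp ε - 1) + 1 - Real.exp (-L) := by
  obtain ⟨h1, h2⟩ := hL
  have a : Real.exp (-L) * L ≤ 1 - Real.exp (-L) := by
    have : L ≤ Real.exp L - 1 := by linarith [Real.add_one_le_exp L]
    have h := mul_le_mul_of_nonneg_left this (Real.exp_pos (-L)).le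
    rw [mul_sub, ← Real.exp_add] at h
    simpa using h
  have b : (1 - Real.exp (-L)) * L ≤ ε * (Real.exp ε - 1) := by
    rcases le_total 0 L with h | h
    · have : 1 - Real.exp (-L) ≤ Real.exp ε - 1 := by
        linarith [Real.add_one_le_exp (-L), Real.add_one_le_exp ε]
      rw [mul_comm]
      have h3 : 0 ≤ Real.exp ε - 1 := by linarith [Real.add_one_le_exp ε]
      exact (mul_le_mul_of_nonneg_left this h).trans (mul_le_mul_of_nonneg_right h2 h3)
    · have : Real.exp (-L) - 1 ≤ Real.exp ε - 1 := by
        linarith [Real.exp_le_exp.2 (show -L ≤ ε by linarith)]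
      have h3 : 0 ≤ Real.exp ε - 1 := by linarith [Real.add_one_le_exp ε]
      calc _ = (-L) * (Real.exp (-L) - 1) := by ring
        _ ≤ (-L) * (Real.exp ε - 1) := mul_le_mul_of_nonneg_left this (by linarith)
        _ ≤ _ := mul_le_mul_of_nonneg_right (by linarith) h3
  linarith

lemma ac_mean {R : Type*} [MeasurableSpace R] (ν : Measure R) [IsProbabilityMeasure ν]
    (ε : ℝ) (L : R → ℝ) (hm : Measurable L) (hL : ∀ r, L r ∈ Set.Icc (-ε) ε)
    (h : 1 ≤ ∫⁻ r, ENNReal.ofReal (Real.exp (-L r)) ∂ν) :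
    ∫ r, L r ∂ν ≤ ε * (Real.exp ε - 1) := by
  have i1 : Integrable L ν := Integrable.of_mem_Icc (-ε) ε hm.aemeasurable (.of_forall hL)
  have i2 : Integrable (fun r => Real.exp (-L r)) ν :=
    Integrable.of_mem_Icc 0 (Real.exp ε) (by fun_prop) (.of_forall fun r =>
      ⟨(Real.exp_pos _).le, Real.exp_le_exp.2 (by linarith [(hL r).1])⟩)
  rw [← ofReal_integral_eq_lintegral_ofReal i2 (.of_forall fun r => (Real.exp_pos _).le)] at h
  have h' : 1 ≤ ∫ r, Real.exp (-L r) ∂ν := by simpa using h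
  have : ∫ r, L r ∂ν ≤ ∫ r, (ε * (Real.exp ε - 1) + 1 - Real.exp (-L r)) ∂ν :=
    integral_mono i1 ((integrable_const (ε * (Real.exp ε - 1) + 1)).sub i2)
    (fun r => ac_pointwise ε (L r) (hL r))
  have e : ∫ r, (ε * (Real.exp ε - 1) + 1 - Real.exp (-L r)) ∂ν
     = (ε * (Real.exp ε - 1) + 1) - ∫ r, Real.exp (-L r) ∂ν := by
    rw [integral_sub (integrable_const _) i2]; simp
  linarith

open ProbabilityTheory in
lemma ac_tail {k : ℕ} {R : Fin k → Type*} [∀ i, MeasurableSpace (R i)]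
    (ν : ∀ i, Measure (R i)) [∀ i, IsProbabilityMeasure (ν i)]
    (L : ∀ i, R i → ℝ) (hm : ∀ i, Measurable (L i)) (ε δ' : ℝ) (hε : 0 ≤ ε)
    (hL : ∀ i r, L i r ∈ Set.Icc (-ε) ε) (hδ' : 0 < δ') (hδ1 : δ' < 1)
    (h : ∀ i, ∫ r, L i r ∂(ν i) ≤ ε * (Real.exp ε - 1)) :
    Measure.pi ν {x | ε * Real.sqrt (2 * k * Real.log (1 / δ')) + k * ε * (Real.exp ε - 1)
      < ∑ i, L i (x i)} ≤ ENNReal.ofReal δ' := by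
  have hlog : 0 < Real.log (1 / δ') := Real.log_pos (by rw [lt_div_iff₀ hδ']; linarith)
  rcases Nat.eq_zero_or_pos k with rfl | hk
  · simp
  rcases hε.eq_or_lt with rfl | hε
  · have : ∀ x : ∀ i, R i, ∑ i, L i (x i) = 0 := fun x =>
      Finset.sum_eq_zero fun i _ => by have := hL i (x i); simpa using this
    simp [this]
  have hk' : (0:ℝ) < k := by exact_mod_cast hk
  set t := ε * Real.sqrt (2 * k * Real.log (1 / δ')) with ht
  have hind : iIndepFun (fun i (x : ∀ i, R i) => L i (x i) - ∫ r, L i r ∂(ν i)) (Measure.pi ν) :=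
    iIndepFun_pi (X := fun i r => L i r - ∫ r, L i r ∂(ν i)) (fun i => by have := hm i; fun_prop)
  have hsub : ∀ i ∈ Finset.univ, HasSubgaussianMGF
      (fun (x : ∀ i, R i) => L i (x i) - ∫ r, L i r ∂(ν i)) ((‖ε - -ε‖₊ / 2) ^ 2) (Measure.pi ν) := by
    intro i _
    have := hasSubgaussianMGF_of_mem_Icc (μ := Measure.pi ν) (X := fun x => L i (x i))
      (a := -ε) (b := ε) (((hm i).comp (measurable_pi_apply i)).aemeasurable)
      (.of_forall fun x => hL i (x i))
    rwa [integral_comp_eval (hm i).aestronglyMeasurable] at this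
  have key := HasSubgaussianMGF.measure_sum_ge_le_of_iIndepFun hind hsub (ε := t) (by positivity)
  have hexp : Real.exp (-t ^ 2 / (2 * ((∑ i : Fin k, ((‖ε - -ε‖₊ / 2) ^ 2 : NNReal) : NNReal) : ℝ))) = δ' := by
    have e1 : ((∑ i : Fin k, ((‖ε - -ε‖₊ / 2) ^ 2 : NNReal) : NNReal) : ℝ) = k * ε ^ 2 := by
      simp only [Finset.sum_const, Finset.card_univ, Fintype.card_fin]
      push_cast
      rw [nsmul_eq_mul, Real.norm_eq_abs, abs_of_pos (by linarith)]
      ring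
    rw [e1, ht, mul_pow, Real.sq_sqrt (by positivity)]
    have : -(ε ^ 2 * (2 * k * Real.log (1 / δ'))) / (2 * (k * ε ^ 2)) = Real.log δ' := by
      rw [one_div, Real.log_inv]; field_simp
    rw [this, Real.exp_log hδ']
  push_cast at key hexp
  rw [hexp] at key
  rw [← ofReal_measureReal]
  apply ENNReal.ofReal_le_ofReal
  refine le_trans (measureReal_mono ?_) key
  intro x hx
  simp only [Set.mem_ofPred_eq] at hx ⊢
  rw [Finset.sum_sub_distrib]
  have : ∑ i, ∫ r, L i r ∂(ν i) ≤ k * (ε * (Real.exp ε - 1)) := by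
    have := Finset.sum_le_sum (s := Finset.univ) fun i _ => h i
    simpa using this
  linarith

lemma ac_prod_bound {k : ℕ} (c : Fin k → ENNReal) (δ : ℝ) (hδ : 0 ≤ δ) (hc1 : ∀ i, c i ≤ 1)
    (hc : ∀ i, 1 ≤ c i + ENNReal.ofReal δ) :
    1 ≤ ∏ i, c i + ENNReal.ofReal (k * δ) := by
  induction k with
  | zero => simp
  | succ k ih =>
    have := ih (fun i => c i.succ) (fun i => hc1 _) (fun i => hc _)
    rw [Fin.prod_univ_succ]
    have e : ENNReal.ofReal ((k + 1 : ℕ) * δ) = ENNReal.ofReal (k * δ) + ENNReal.ofReal δ := by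
      rw [← ENNReal.ofReal_add (by positivity) hδ]; push_cast; ring_nf
    rw [e]
    calc 1 ≤ c 0 * 1 + ENNReal.ofReal δ := by simpa using hc 0
      _ ≤ c 0 * (∏ i : Fin k, c i.succ + ENNReal.ofReal (k * δ)) + ENNReal.ofReal δ := by gcongr
      _ = c 0 * ∏ i : Fin k, c i.succ + c 0 * ENNReal.ofReal (k * δ) + ENNReal.ofReal δ := by ring
      _ ≤ c 0 * ∏ i : Fin k, c i.succ + 1 * ENNReal.ofReal (k * δ) + ENNReal.ofReal δ := by
        gcongr; exact hc1 0
      _ = _ := by ring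

lemma ac_compose {k : ℕ} {R : Fin k → Type*} [∀ i, MeasurableSpace (R i)]
    (P Q : ∀ i, Measure (R i)) [∀ i, IsProbabilityMeasure (P i)] [∀ i, IsProbabilityMeasure (Q i)]
    (ε δ δ' : ℝ) (hε : 0 ≤ ε) (hδ : 0 ≤ δ) (hδ' : 0 < δ') (hδ1 : δ' < 1)
    (h : ∀ i, ACGood (P i) (Q i) ε δ) (S : Set (∀ i, R i)) (hS : MeasurableSet S) :
    Measure.pi P S ≤ ENNReal.ofReal (Real.exp
      (ε * Real.sqrt (2 * k * Real.log (1 / δ')) + k * ε * (Real.exp ε - 1))) * Measure.pi Q S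
      + ENNReal.ofReal (k * δ + δ') := by
  choose ν L c hν hm hL hc1 hc hP hQ hI using h
  have tail := ac_tail ν L hm ε δ' hε hL hδ' hδ1 (fun i => ac_mean (ν i) ε (L i) (hm i) (hL i) (hI i))
  set E := ε * Real.sqrt (2 * k * Real.log (1 / δ')) + k * ε * (Real.exp ε - 1)
  set C := ∏ i, c i with hC
  have hC1 : C ≤ 1 := Finset.prod_le_one' fun i _ => hc1 i
  have hCb := ac_prod_bound c δ hδ hc1 hc
  have fin1 : ∀ i, IsFiniteMeasure (c i • ν i) := fun i =>
    ⟨by simpa using lt_of_le_of_lt (hc1 i) ENNReal.one_lt_top⟩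
  have hCP : C • Measure.pi ν ≤ Measure.pi P := by
    rw [hC, ← ac_pi_smul ν c hc1]
    exact ac_pi_mono _ _ hP
  have hf : ∀ i, Measurable (fun r => ENNReal.ofReal (Real.exp (-L i r))) := fun i => by
    have := hm i; fun_prop
  have hbd : ∀ i r, ENNReal.ofReal (Real.exp (-L i r)) ≤ ENNReal.ofReal (Real.exp ε) := fun i r =>
    ENNReal.ofReal_le_ofReal (Real.exp_le_exp.2 (by linarith [(hL i r).1]))
  have hCQ : C • (Measure.pi ν).withDensity (fun x => ∏ i, ENNReal.ofReal (Real.exp (-L i (x i))))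
      ≤ Measure.pi Q := by
    have hden : ∀ i, c i • (ν i).withDensity (fun r => ENNReal.ofReal (Real.exp (-L i r)))
        = (ν i).withDensity (fun r => c i * ENNReal.ofReal (Real.exp (-L i r))) := fun i =>
      (withDensity_smul _ (hf i)).symm
    have fin2 : ∀ i, IsFiniteMeasure
        ((ν i).withDensity (fun r => c i * ENNReal.ofReal (Real.exp (-L i r)))) := fun i => by
      rw [← hden]; exact isFiniteMeasure_of_le _ (hQ i)
    have e := ac_pi_withDensity ν (fun i r => c i * ENNReal.ofReal (Real.exp (-L i r)))
      (fun i => (hf i).const_mul _)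
    have e2 : (fun x : ∀ i, R i => ∏ i, (c i * ENNReal.ofReal (Real.exp (-L i (x i)))))
        = C • fun x => ∏ i, ENNReal.ofReal (Real.exp (-L i (x i))) := by
      ext x; simp [Finset.prod_mul_distrib, hC]
    have hmp : Measurable (fun x : ∀ i, R i => ∏ i, ENNReal.ofReal (Real.exp (-L i (x i)))) :=
      Finset.measurable_fun_prod _ fun i _ => (hf i).comp (measurable_pi_apply i)
    rw [← withDensity_smul _ hmp, ← e2, ← e]
    exact ac_pi_mono _ _ fun i => by rw [← hden]; exact hQ i
  have hmS : Measurable (fun x : ∀ i, R i => ∑ i, L i (x i)) :=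
    Finset.measurable_fun_sum _ fun i _ => (hm i).comp (measurable_pi_apply i)
  -- step 1
  have s1 : Measure.pi P S ≤ C * Measure.pi ν S + ENNReal.ofReal (k * δ) := by
    have a1 : C * Measure.pi ν Sᶜ ≤ Measure.pi P Sᶜ := hCP Sᶜ
    have a2 : Measure.pi P S + Measure.pi P Sᶜ = 1 := prob_add_prob_compl hS
    have a3 : Measure.pi ν S + Measure.pi ν Sᶜ = 1 := prob_add_prob_compl hS
    have a4 : Measure.pi P S + Measure.pi P Sᶜ ≤
        C * Measure.pi ν S + ENNReal.ofReal (k * δ) + Measure.pi P Sᶜ := by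
      rw [a2]
      calc 1 ≤ C * (Measure.pi ν S + Measure.pi ν Sᶜ) + ENNReal.ofReal (k * δ) := by
            rw [a3, mul_one]; exact hCb
        _ = C * Measure.pi ν S + ENNReal.ofReal (k * δ) + C * Measure.pi ν Sᶜ := by ring
        _ ≤ _ := by gcongr
    exact (ENNReal.add_le_add_iff_right (measure_ne_top _ _)).1 a4
  set T : Set (∀ i, R i) := {x | E < ∑ i, L i (x i)} with hT
  have hTm : MeasurableSet T := measurableSet_lt measurable_const hmS
  have s2 : C * Measure.pi ν (S \ T) ≤ ENNReal.ofReal (Real.exp E) * Measure.pi Q S := by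
    have b1 : Measure.pi ν (S \ T) ≤ ENNReal.ofReal (Real.exp E) *
        (Measure.pi ν).withDensity (fun x => ∏ i, ENNReal.ofReal (Real.exp (-L i (x i)))) (S \ T) := by
      rw [withDensity_apply _ (hS.diff hTm), ← lintegral_const_mul' _ _ ENNReal.ofReal_ne_top,
        ← setLIntegral_one]
      refine setLIntegral_mono' (hS.diff hTm) fun x hx => ?_
      have : ∑ i, L i (x i) ≤ E := not_lt.1 hx.2
      rw [← ENNReal.ofReal_prod_of_nonneg (fun i _ => (Real.exp_pos _).le), ← Real.exp_sum,
        ← ENNReal.ofReal_mul (Real.exp_pos _).le, ← Real.exp_add]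
      rw [ENNReal.one_le_ofReal]
      apply Real.one_le_exp
      rw [Finset.sum_neg_distrib]; linarith
    calc _ ≤ C * (ENNReal.ofReal (Real.exp E) *
        (Measure.pi ν).withDensity (fun x => ∏ i, ENNReal.ofReal (Real.exp (-L i (x i)))) (S \ T)) := by gcongr
      _ = ENNReal.ofReal (Real.exp E) * (C •
        (Measure.pi ν).withDensity (fun x => ∏ i, ENNReal.ofReal (Real.exp (-L i (x i))))) (S \ T) := by
          simp only [Measure.smul_apply, smul_eq_mul]; ring
      _ ≤ ENNReal.ofReal (Real.exp E) * Measure.pi Q (S \ T) := by gcongr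
      _ ≤ _ := by gcongr; exact Set.sdiff_subset
  have s3 : Measure.pi ν S ≤ Measure.pi ν (S \ T) + Measure.pi ν T := by
    refine (measure_mono (t := (S \ T) ∪ T) (by simp)).trans (measure_union_le _ _)
  calc _ ≤ C * Measure.pi ν S + ENNReal.ofReal (k * δ) := s1
    _ ≤ C * (Measure.pi ν (S \ T) + Measure.pi ν T) + ENNReal.ofReal (k * δ) := by gcongr
    _ = C * Measure.pi ν (S \ T) + (ENNReal.ofReal (k * δ) + C * Measure.pi ν T) := by ring
    _ ≤ ENNReal.ofReal (Real.exp E) * Measure.pi Q S +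
        (ENNReal.ofReal (k * δ) + 1 * ENNReal.ofReal δ') := by gcongr
    _ = _ := by rw [one_mul, ← ENNReal.ofReal_add (by positivity) hδ'.le]
lemma ac_good_of_density {R : Type*} [MeasurableSpace R] (μ P Q : Measure R)
    [IsProbabilityMeasure P] (ε δ : ℝ) (hε : 0 ≤ ε) (hδ1 : δ < 1)
    (f g : R → ℝ) (hf : Measurable f) (hg : Measurable g) (hf0 : ∀ r, 0 ≤ f r)
    (hfg : ∀ r, f r ≤ Real.exp ε * g r) (hgf : ∀ r, g r ≤ Real.exp ε * f r)
    (hP : μ.withDensity (fun r => ENNReal.ofReal (f r)) ≤ P)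
    (hQ : μ.withDensity (fun r => ENNReal.ofReal (g r)) ≤ Q)
    (hmass : 1 ≤ ∫⁻ r, ENNReal.ofReal (f r) ∂μ + ENNReal.ofReal δ)
    (hle : ∫⁻ r, ENNReal.ofReal (f r) ∂μ ≤ ∫⁻ r, ENNReal.ofReal (g r) ∂μ) :
    ACGood P Q ε δ := by
  set c := ∫⁻ r, ENNReal.ofReal (f r) ∂μ with hc
  have hc1 : c ≤ 1 := by
    have := hP Set.univ
    simpa [withDensity_apply _ MeasurableSet.univ] using this
  have hctop : c ≠ ⊤ := (lt_of_le_of_lt hc1 ENNReal.one_lt_top).ne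
  have hc0 : c ≠ 0 := by
    intro h
    rw [h, zero_add, ENNReal.one_le_ofReal] at hmass
    linarith
  set P0 := μ.withDensity (fun r => ENNReal.ofReal (f r)) with hP0
  have hexp : ∀ r, f r * Real.exp (-Real.log (f r / g r)) = g r := by
    intro r
    rcases (hf0 r).eq_or_lt with h | h
    · have : g r = 0 := by
        apply le_antisymm
        · have := hgf r; rw [← h] at this; simpa using this
        · have := hfg r; rw [← h] at this
          exact nonneg_of_mul_nonneg_right this (Real.exp_pos ε)
      rw [← h, this]; simp
    · have hg' : 0 < g r := by
        have := lt_of_lt_of_le h (hfg r)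
        exact pos_of_mul_pos_right this (Real.exp_pos ε).le
      rw [← Real.log_inv, Real.exp_log (by positivity)]
      field_simp
  have hL : ∀ r, Real.log (f r / g r) ∈ Set.Icc (-ε) ε := by
    intro r
    rcases (hf0 r).eq_or_lt with h | h
    · rw [← h]; simp [hε]
    · have hg' : 0 < g r := by
        have := lt_of_lt_of_le h (hfg r)
        exact pos_of_mul_pos_right this (Real.exp_pos ε).le
      constructor
      · rw [Real.le_log_iff_exp_le (by positivity), le_div_iff₀ hg', Real.exp_neg,
          inv_mul_le_iff₀ (Real.exp_pos ε)]
        exact hgf r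
      · rw [Real.log_le_iff_le_exp (by positivity), div_le_iff₀ hg']
        exact hfg r
  have hLm : Measurable fun r => Real.log (f r / g r) := (hf.div hg).log
  have hden : P0.withDensity (fun r => ENNReal.ofReal (Real.exp (-Real.log (f r / g r))))
      = μ.withDensity (fun r => ENNReal.ofReal (g r)) := by
    rw [hP0, ← withDensity_mul _ (by fun_prop) (by fun_prop)]
    congr 1
    ext r
    rw [Pi.mul_apply, ← ENNReal.ofReal_mul (hf0 r), hexp]
  have hcc : c • c⁻¹ • P0 = P0 := by
    rw [smul_smul, ENNReal.mul_inv_cancel hc0 hctop, one_smul]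
  have hP0u : P0 Set.univ = c := by
    rw [hP0, withDensity_apply _ MeasurableSet.univ, Measure.restrict_univ]
  refine ⟨c⁻¹ • P0, fun r => Real.log (f r / g r), c, ⟨?_⟩, hLm, hL, hc1, hmass, ?_, ?_, ?_⟩
  · rw [Measure.smul_apply, hP0u, smul_eq_mul, ENNReal.inv_mul_cancel hc0 hctop]
  · rw [hcc]; exact hP
  · rw [← withDensity_smul_measure, hcc, hden]; exact hQ
  · rw [lintegral_smul_measure]
    have : ∫⁻ r, ENNReal.ofReal (Real.exp (-Real.log (f r / g r))) ∂P0
        = ∫⁻ r, ENNReal.ofReal (g r) ∂μ := by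
      have := congrArg (fun m : Measure R => m Set.univ) hden
      simpa [withDensity_apply _ MeasurableSet.univ] using this
    rw [this, smul_eq_mul, ← ENNReal.inv_mul_cancel hc0 hctop]
    gcongr

lemma ac_exists_density {R : Type*} [MeasurableSpace R] (P μ : Measure R)
    [IsFiniteMeasure P] [IsFiniteMeasure μ] (h : P ≪ μ) :
    ∃ p : R → ℝ, Measurable p ∧ (∀ r, 0 ≤ p r) ∧ μ.withDensity (fun r => ENNReal.ofReal (p r)) = P := by
  refine ⟨fun r => (P.rnDeriv μ r).toReal, (Measure.measurable_rnDeriv _ _).ennreal_toReal,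
    fun r => ENNReal.toReal_nonneg, ?_⟩
  conv_rhs => rw [← Measure.withDensity_rnDeriv_eq P μ h]
  apply withDensity_congr_ae
  filter_upwards [Measure.rnDeriv_lt_top P μ] with r hr
  exact ENNReal.ofReal_toReal hr.ne

lemma ac_min_mass {R : Type*} [MeasurableSpace R] (μ P Q : Measure R)
    [IsProbabilityMeasure P] (ε δ : ℝ)
    (p q : R → ℝ) (hp : Measurable p) (hq : Measurable q)
    (hP : μ.withDensity (fun r => ENNReal.ofReal (p r)) = P)
    (hQ : μ.withDensity (fun r => ENNReal.ofReal (q r)) = Q)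
    (h : ∀ S, MeasurableSet S → P S ≤ ENNReal.ofReal (Real.exp ε) * Q S + ENNReal.ofReal δ) :
    1 ≤ ∫⁻ r, ENNReal.ofReal (min (p r) (Real.exp ε * q r)) ∂μ + ENNReal.ofReal δ := by
  set A : Set R := {r | p r ≤ Real.exp ε * q r} with hA
  have hAm : MeasurableSet A := measurableSet_le hp (by fun_prop)
  rw [← lintegral_add_compl _ hAm]
  have e1 : ∫⁻ r in A, ENNReal.ofReal (min (p r) (Real.exp ε * q r)) ∂μ = P A := by
    rw [← hP, withDensity_apply _ hAm]
    refine setLIntegral_congr_fun hAm fun r hr => ?_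
    have hr' : p r ≤ Real.exp ε * q r := hr
    simp only [min_eq_left hr']
  have e2 : ∫⁻ r in Aᶜ, ENNReal.ofReal (min (p r) (Real.exp ε * q r)) ∂μ =
      ENNReal.ofReal (Real.exp ε) * Q Aᶜ := by
    rw [← hQ, withDensity_apply _ hAm.compl, ← lintegral_const_mul' _ _ ENNReal.ofReal_ne_top]
    refine setLIntegral_congr_fun hAm.compl fun r hr => ?_
    have hr' : ¬ p r ≤ Real.exp ε * q r := hr
    simp only [min_eq_right (not_le.1 hr').le]
    rw [ENNReal.ofReal_mul (Real.exp_pos ε).le]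
  rw [e1, e2, add_assoc, ← prob_add_prob_compl (μ := P) hAm]
  gcongr
  exact h _ hAm.compl

lemma ac_good {R : Type*} [MeasurableSpace R] (P Q : Measure R)
    [IsProbabilityMeasure P] [IsProbabilityMeasure Q] (ε δ : ℝ) (hε : 0 ≤ ε) (hδ1 : δ < 1)
    (h1 : ∀ S, MeasurableSet S → P S ≤ ENNReal.ofReal (Real.exp ε) * Q S + ENNReal.ofReal δ)
    (h2 : ∀ S, MeasurableSet S → Q S ≤ ENNReal.ofReal (Real.exp ε) * P S + ENNReal.ofReal δ) :
    ACGood P Q ε δ := by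
  obtain ⟨p, hp, hp0, hP⟩ := ac_exists_density P (P + Q)
    (Measure.absolutelyContinuous_of_le (Measure.le_add_right le_rfl))
  obtain ⟨q, hq, hq0, hQ⟩ := ac_exists_density Q (P + Q)
    (Measure.absolutelyContinuous_of_le (Measure.le_add_left le_rfl))
  set μ := P + Q
  have m1 := ac_min_mass μ P Q ε δ p q hp hq hP hQ h1
  have m2 := ac_min_mass μ Q P ε δ q p hq hp hQ hP h2
  set f : R → ℝ := fun r => min (p r) (Real.exp ε * q r) with hf
  set g : R → ℝ := fun r => min (q r) (Real.exp ε * p r) with hg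
  have hfm : Measurable f := hp.min (by fun_prop)
  have hgm : Measurable g := hq.min (by fun_prop)
  have he1 : 1 ≤ Real.exp ε := Real.one_le_exp hε
  have hf0 : ∀ r, 0 ≤ f r := fun r => le_min (hp0 r) (mul_nonneg (Real.exp_pos ε).le (hq0 r))
  have hg0 : ∀ r, 0 ≤ g r := fun r => le_min (hq0 r) (mul_nonneg (Real.exp_pos ε).le (hp0 r))
  have aux : ∀ a b : ℝ, 0 ≤ a → min a (Real.exp ε * b) ≤ Real.exp ε * min b (Real.exp ε * a) := by
    intro a b ha
    rw [mul_min_of_nonneg _ _ (Real.exp_pos ε).le]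
    refine le_min (min_le_right _ _) ((min_le_left _ _).trans ?_)
    nlinarith [mul_nonneg (Real.exp_pos ε).le ha]
  have hfg : ∀ r, f r ≤ Real.exp ε * g r := fun r => aux _ _ (hp0 r)
  have hgf : ∀ r, g r ≤ Real.exp ε * f r := fun r => aux _ _ (hq0 r)
  have hfP : μ.withDensity (fun r => ENNReal.ofReal (f r)) ≤ P := by
    rw [← hP]
    exact withDensity_mono (.of_forall fun r => ENNReal.ofReal_le_ofReal (min_le_left _ _))
  have hgQ : μ.withDensity (fun r => ENNReal.ofReal (g r)) ≤ Q := by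
    rw [← hQ]
    exact withDensity_mono (.of_forall fun r => ENNReal.ofReal_le_ofReal (min_le_left _ _))
  rcases le_total (∫⁻ r, ENNReal.ofReal (f r) ∂μ) (∫⁻ r, ENNReal.ofReal (g r) ∂μ) with hab | hab
  · exact ac_good_of_density μ P Q ε δ hε hδ1 f g hfm hgm hf0 hfg hgf hfP hgQ m1 hab
  -- interpolate between `f` and `exp (-ε) * g`
  have ha1 : ∫⁻ r, ENNReal.ofReal (f r) ∂μ ≤ 1 := by
    have := hfP Set.univ
    simpa [withDensity_apply _ MeasurableSet.univ] using this
  have hb1 := hab.trans ha1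
  set a := (∫⁻ r, ENNReal.ofReal (f r) ∂μ).toReal with ha
  set b := (∫⁻ r, ENNReal.ofReal (g r) ∂μ).toReal with hb
  have haE : ∫⁻ r, ENNReal.ofReal (f r) ∂μ = ENNReal.ofReal a :=
    (ENNReal.ofReal_toReal (lt_of_le_of_lt ha1 ENNReal.one_lt_top).ne).symm
  have hbE : ∫⁻ r, ENNReal.ofReal (g r) ∂μ = ENNReal.ofReal b :=
    (ENNReal.ofReal_toReal (lt_of_le_of_lt hb1 ENNReal.one_lt_top).ne).symm
  have ha0 : 0 ≤ a := ENNReal.toReal_nonneg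
  have hb0 : 0 ≤ b := ENNReal.toReal_nonneg
  have hba : b ≤ a := by
    rw [haE, hbE] at hab
    exact (ENNReal.ofReal_le_ofReal_iff ha0).1 hab
  set s := Real.exp (-ε) with hs
  have hs0 : 0 < s := Real.exp_pos _
  have hs1 : s ≤ 1 := Real.exp_le_one_iff.2 (by linarith)
  have hse : Real.exp ε * s = 1 := by rw [hs, ← Real.exp_add]; simp
  obtain ⟨t, ht0, ht1, ht⟩ : ∃ t : ℝ, 0 ≤ t ∧ t ≤ 1 ∧ t * a + (1 - t) * (s * b) = b := by
    have hsb : s * b ≤ b := by nlinarith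
    rcases (hsb.trans hba).eq_or_lt with h | h
    · exact ⟨1, by norm_num, le_rfl, by linarith⟩
    · refine ⟨(b - s * b) / (a - s * b), div_nonneg (by linarith) (by linarith), ?_, ?_⟩
      · rw [div_le_one (by linarith)]; linarith
      · have : a - s * b ≠ 0 := by linarith
        have e : (b - s * b) / (a - s * b) * (a - s * b) = b - s * b := div_mul_cancel₀ _ this
        linear_combination e
  have hsgf : ∀ r, s * g r ≤ f r := fun r => by
    have := mul_le_mul_of_nonneg_left (hgf r) hs0.le
    rwa [← mul_assoc, mul_comm s (Real.exp ε), hse, one_mul] at this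
  set w : R → ℝ := fun r => t * f r + (1 - t) * (s * g r) with hw
  have hwf : ∀ r, w r ≤ f r := fun r => by
    have := mul_le_mul_of_nonneg_left (hsgf r) (sub_nonneg.2 ht1)
    simp only [hw]; linarith
  have hsw : ∀ r, s * g r ≤ w r := fun r => by
    have := mul_le_mul_of_nonneg_left (hsgf r) ht0
    simp only [hw]; linarith
  have hwm : Measurable w := by fun_prop
  have hwI : ∫⁻ r, ENNReal.ofReal (w r) ∂μ = ENNReal.ofReal b := by
    have e : ∀ r, ENNReal.ofReal (w r) = ENNReal.ofReal t * ENNReal.ofReal (f r)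
        + ENNReal.ofReal ((1 - t) * s) * ENNReal.ofReal (g r) := fun r => by
      have h3 : 0 ≤ (1 - t) * s := mul_nonneg (by linarith) hs0.le
      rw [← ENNReal.ofReal_mul ht0, ← ENNReal.ofReal_mul h3,
        ← ENNReal.ofReal_add (mul_nonneg ht0 (hf0 r)) (mul_nonneg h3 (hg0 r))]
      simp only [hw]; congr 1; ring
    have h3 : 0 ≤ (1 - t) * s := mul_nonneg (by linarith) hs0.le
    simp_rw [e]
    rw [lintegral_add_left (by fun_prop), lintegral_const_mul' _ _ ENNReal.ofReal_ne_top,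
      lintegral_const_mul' _ _ ENNReal.ofReal_ne_top, haE, hbE, ← ENNReal.ofReal_mul ht0,
      ← ENNReal.ofReal_mul h3, ← ENNReal.ofReal_add (mul_nonneg ht0 ha0) (mul_nonneg h3 hb0)]
    congr 1; linarith
  refine ac_good_of_density μ P Q ε δ hε hδ1 w g hwm hgm
    (fun r => (mul_nonneg hs0.le (hg0 r)).trans (hsw r)) (fun r => (hwf r).trans (hfg r)) ?_ ?_ hgQ ?_ ?_
  · intro r
    have := mul_le_mul_of_nonneg_left (hsw r) (Real.exp_pos ε).le
    rwa [← mul_assoc, hse, one_mul] at this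
  · exact (withDensity_mono (.of_forall fun r => ENNReal.ofReal_le_ofReal (hwf r))).trans hfP
  · rw [hwI, ← hbE]; exact m2
  · rw [hwI, hbE]

lemma ac_neighbor_symm {D : Type*} {n : ℕ} {x y : Fin n → D} (h : Neighbor x y) :
    Neighbor y x := by
  unfold Neighbor at *
  rw [← h]
  congr 1
  ext i
  simp [ne_comm]

/-- Advanced composition (Dwork–Rothblum–Vadhan): if an `(ε, δ)`-differentially
private mechanism is run `k` times, then for any `δ' > 0` the composition of all
`k` invocations satisfies `(ε', kδ + δ')`-differential privacy, where
`ε' = ε·√(2k·ln(1/δ')) + k·ε·(e^ε − 1)`. -/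
theorem advanced_composition {D : Type*} {n : ℕ} {k : ℕ}
    {R : Fin k → Type*} [∀ i, MeasurableSpace (R i)]
    (K : ∀ i : Fin k, (Fin n → D) → Measure (R i))
    (ε δ δ' : ℝ) (hε : 0 ≤ ε) (hδ : 0 ≤ δ) (hδ' : 0 < δ')
    (hprob : ∀ i x, IsProbabilityMeasure (K i x))
    (hK : ∀ i, DiffPriv (K i) ε δ) :
    DiffPriv (fun x => Measure.pi (fun i => K i x))
      (ε * Real.sqrt (2 * k * Real.log (1 / δ')) + k * ε * (Real.exp ε - 1))
      (k * δ + δ') := by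
  intro x y hxy S hS
  simp only
  rcases Nat.eq_zero_or_pos k with rfl | hk
  · have : (fun i => K i x) = fun i => K i y := by
      funext i; exact i.elim0
    rw [this]
    simp
  have hk1 : (1 : ℝ) ≤ k := by exact_mod_cast hk
  have triv : 1 ≤ k * δ + δ' → Measure.pi (fun i => K i x) S ≤
      ENNReal.ofReal (Real.exp
      (ε * Real.sqrt (2 * k * Real.log (1 / δ')) + k * ε * (Real.exp ε - 1))) *
      Measure.pi (fun i => K i y) S + ENNReal.ofReal (k * δ + δ') := fun h =>
    prob_le_one.trans ((ENNReal.one_le_ofReal.2 h).trans le_add_self)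
  rcases le_or_gt 1 δ' with h | hδ'1
  · exact triv (by nlinarith)
  rcases le_or_gt 1 δ with h | hδ1
  · exact triv (by nlinarith)
  exact ac_compose (fun i => K i x) (fun i => K i y) ε δ δ' hε hδ hδ' hδ'1
    (fun i => ac_good _ _ ε δ hε hδ1 (hK i x y hxy) (hK i y x (ac_neighbor_symm hxy))) S hS
end

section
/- WPINQ join stability: define the weighted join of weighted datasets A and B over key k by assigning, to each pair of rows (a, b) with common key k, weight A(a)·B(b)/(‖A_k‖ + ‖B_k‖), where A_k denotes the restriction of A to rows with key k and ‖A_k‖ = Σ_a A_k(a). Then for fixed B, the map A ↦ A ⋈ B is 1-Lipschitz with respect to the L1 distance on weight functions: ‖(A ⋈ B) − (A' ⋈ B)‖ ≤ ‖A − A'‖. -/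
open Classical

/-- The total weight of the rows of weighted dataset `A` having key `k`. -/
noncomputable def keyNorm {α κ : Type*} [Fintype α] (keyA : α → κ) (A : α → ℝ) (k : κ) : ℝ :=
  ∑ a ∈ Finset.univ.filter (fun a => keyA a = k), A a

/-- The WPINQ weighted join: the output row `(a, b)` (matching on keys) gets
weight `A(a)·B(b) / (‖A_k‖ + ‖B_k‖)` where `k` is the common key. -/
noncomputable def wJoin {α β κ : Type*} [Fintype α] [Fintype β]
    (keyA : α → κ) (keyB : β → κ) (A : α → ℝ) (B : β → ℝ) (p : α × β) : ℝ :=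
  if keyA p.1 = keyB p.2 then
    A p.1 * B p.2 / (keyNorm keyA A (keyA p.1) + keyNorm keyB B (keyA p.1))
  else 0

theorem aux_half {α : Type*} (s : Finset α) (A A' : α → ℝ) (M : ℝ) (hM : 0 ≤ M)
    (hA : ∀ a, 0 ≤ A a) (hA' : ∀ a, 0 ≤ A' a) (h : ∑ a ∈ s, A' a ≤ ∑ a ∈ s, A a) :
    ∑ a ∈ s, M * |A a / (∑ a ∈ s, A a + M) - A' a / (∑ a ∈ s, A' a + M)|
      ≤ ∑ a ∈ s, |A a - A' a| := by
  rcases hM.eq_or_lt with h0 | hM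
  · subst h0
    simp only [zero_mul, Finset.sum_const_zero]
    exact Finset.sum_nonneg fun _ _ => abs_nonneg _
  have hN' : 0 ≤ ∑ a ∈ s, A' a := Finset.sum_nonneg fun a _ => hA' a
  have hD : ∑ a ∈ s, A a - ∑ a ∈ s, A' a ≤ ∑ a ∈ s, |A a - A' a| := by
    rw [← Finset.sum_sub_distrib]
    exact Finset.sum_le_sum fun a _ => le_abs_self _
  have hD0 : 0 ≤ ∑ a ∈ s, |A a - A' a| := Finset.sum_nonneg fun _ _ => abs_nonneg _
  generalize hN : ∑ a ∈ s, A a = N at *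
  generalize hN2 : ∑ a ∈ s, A' a = N' at *
  have p1 : 0 < N + M := by linarith
  have p2 : 0 < N' + M := by linarith
  have key : ∀ a ∈ s, M * |A a / (N + M) - A' a / (N' + M)| ≤
      M / (N + M) * |A a - A' a| + A' a * (M * (N - N') / ((N + M) * (N' + M))) := by
    intro a _
    have e : A a / (N + M) - A' a / (N' + M) =
        (A a - A' a) / (N + M) - A' a * (N - N') / ((N + M) * (N' + M)) := by
      field_simp
      ring
    have t := abs_sub ((A a - A' a) / (N + M)) (A' a * (N - N') / ((N + M) * (N' + M)))
    rw [← e, abs_div, abs_of_pos p1, abs_of_nonneg (a := A' a * (N - N') / _)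
      (div_nonneg (mul_nonneg (hA' a) (by linarith)) (by positivity))] at t
    calc _ ≤ M * _ := mul_le_mul_of_nonneg_left t hM.le
      _ = _ := by ring
  refine (Finset.sum_le_sum key).trans ?_
  rw [Finset.sum_add_distrib, ← Finset.mul_sum, ← Finset.sum_mul, hN2]
  generalize ∑ a ∈ s, |A a - A' a| = D at *
  have e : M / (N + M) * D + N' * (M * (N - N') / ((N + M) * (N' + M))) =
      (M * D * (N' + M) + N' * M * (N - N')) / ((N + M) * (N' + M)) := by
    field_simp
  rw [e, div_le_iff₀ (by positivity)]
  have q1 : N' * M * (N - N') ≤ N' * M * D := mul_le_mul_of_nonneg_left hD (by positivity)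
  have q2 : 0 ≤ D * (N * N' + M * (N - N')) :=
    mul_nonneg hD0 (add_nonneg (mul_nonneg (by linarith) hN') (mul_nonneg hM.le (by linarith)))
  nlinarith

theorem aux_full {α : Type*} (s : Finset α) (A A' : α → ℝ) (M : ℝ) (hM : 0 ≤ M)
    (hA : ∀ a, 0 ≤ A a) (hA' : ∀ a, 0 ≤ A' a) :
    ∑ a ∈ s, M * |A a / (∑ a ∈ s, A a + M) - A' a / (∑ a ∈ s, A' a + M)|
      ≤ ∑ a ∈ s, |A a - A' a| := by
  rcases le_total (∑ a ∈ s, A' a) (∑ a ∈ s, A a) with h | h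
  · exact aux_half s A A' M hM hA hA' h
  · have := aux_half s A' A M hM hA' hA h
    simpa only [abs_sub_comm] using this

/-- WPINQ join stability: for a fixed weighted dataset `B`, the map
`A ↦ A ⋈ B` is 1-Lipschitz with respect to the L1 distance on weight
functions: `‖(A ⋈ B) − (A' ⋈ B)‖ ≤ ‖A − A'‖`. -/
theorem wpinq_join_stability {α β κ : Type*} [Fintype α] [Fintype β]
    (keyA : α → κ) (keyB : β → κ) (A A' : α → ℝ) (B : β → ℝ)
    (hA : ∀ a, 0 ≤ A a) (hA' : ∀ a, 0 ≤ A' a) (hB : ∀ b, 0 ≤ B b) :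
    ∑ p : α × β, |wJoin keyA keyB A B p - wJoin keyA keyB A' B p|
      ≤ ∑ a : α, |A a - A' a| := by
  have hrow : ∀ a : α, ∑ b : β, |wJoin keyA keyB A B (a, b) - wJoin keyA keyB A' B (a, b)| =
      keyNorm keyB B (keyA a) * |A a / (keyNorm keyA A (keyA a) + keyNorm keyB B (keyA a)) -
        A' a / (keyNorm keyA A' (keyA a) + keyNorm keyB B (keyA a))| := by
    intro a
    conv_rhs => rw [keyNorm, Finset.sum_mul, Finset.sum_filter]
    refine Finset.sum_congr rfl fun b _ => ?_
    by_cases hk : keyA a = keyB b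
    · simp only [wJoin, if_pos hk, if_pos hk.symm]
      rw [← abs_of_nonneg (hB b), ← abs_mul, abs_of_nonneg (hB b)]
      congr 1
      simp only [keyNorm]
      ring
    · simp [wJoin, hk, Ne.symm hk]
  rw [Fintype.sum_prod_type, Finset.sum_congr rfl fun a _ => hrow a]
  have hm : ∀ a ∈ (Finset.univ : Finset α), keyA a ∈ Finset.univ.image keyA :=
    fun a ha => Finset.mem_image_of_mem _ ha
  rw [← Finset.sum_fiberwise_of_maps_to hm, ← Finset.sum_fiberwise_of_maps_to hm]
  refine Finset.sum_le_sum fun k _ => ?_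
  have := aux_full (Finset.univ.filter (fun a => keyA a = k)) A A' (keyNorm keyB B k)
    (Finset.sum_nonneg fun b _ => hB b) hA hA'
  refine le_trans (le_of_eq ?_) this
  refine Finset.sum_congr rfl fun a ha => ?_
  rw [(Finset.mem_filter.1 ha).2]
  rfl
end
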